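/- Let a₄ ∈ ℂ and let μ be the evolution algebra structure on ℂ² relative to the basis e₁, e₂ given by μ(e₁,e₁) = e₂ and μ(e₂,e₂) = e₁ + a₄e₂ (the algebra 𝓔₆(a₄)). Then the space of 2-coboundaries B²(μ) equals the span, as structure matrices, of (0 1; −2 −a₄) and (0 −2; 1 0); explicitly, B²(μ) = { θ ∈ Z²(ℂ²) : θ(e₁,e₁) = (ξ₂ − 2ξ₁)e₂ and θ(e₂,e₂) = (ξ₁ − 2ξ₂)e₁ − a₄ξ₂e₂ for some ξ₁,ξ₂ ∈ ℂ }. -/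

import Mathlib

/-!
Membership in `Z²` with respect to a basis `b` is expressed by `LinearMap.IsOrthoᵢ`, both for the
evolution algebra structure `μ` and for the cocycle `θ`.

Let `μ` be an evolution algebra structure with natural basis `b`. Evaluating `δ_μ φ` on two
distinct basis vectors leaves only a combination of `b i * b i` and `b j * b j` whose coefficients
are the off-diagonal entries of `φ`. If the squares are linearly independent, `δ_μ φ` is therefore
a cocycle exactly when `φ` is diagonal, and a diagonal `φ` with eigenvalues `ξ` multiplies the
`(i, j)` entry of the structure matrix by `ξ j - 2 * ξ i`. For `𝓔₆(a₄)` the squares are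
`e₂` and `e₁ + a₄e₂`, which are independent.
-/

open Module

section OrthogonalBasis

variable {ι R M N : Type*} [CommSemiring R] [AddCommMonoid M] [Module R M] [AddCommMonoid N]
  [Module R N] {b : Basis ι R M}

lemma apply_basis_left_of_isOrthoᵢ {B : M →ₗ[R] M →ₗ[R] N} (hB : B.IsOrthoᵢ b) (i : ι) (x : M) :
    B (b i) x = b.repr x i • B (b i) (b i) := by
  classical
  suffices B (b i) = (b.coord i).smulRight (B (b i) (b i)) from LinearMap.congr_fun this x
  refine b.ext fun j => ?_
  obtain rfl | hij := eq_or_ne i j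
  · simp
  · simpa [Finsupp.single_apply, hij.symm] using hB hij

lemma apply_basis_right_of_isOrthoᵢ {B : M →ₗ[R] M →ₗ[R] N} (hB : B.IsOrthoᵢ b) (x : M) (j : ι) :
    B x (b j) = b.repr x j • B (b j) (b j) :=
  apply_basis_left_of_isOrthoᵢ (B := B.flip) (fun _ _ hij => hB hij.symm) j x

lemma ext_of_isOrthoᵢ {B B' : M →ₗ[R] M →ₗ[R] N} (hB : B.IsOrthoᵢ b) (hB' : B'.IsOrthoᵢ b)
    (h : ∀ i, B (b i) (b i) = B' (b i) (b i)) : B = B' :=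
  b.ext fun i => LinearMap.ext fun x => by
    rw [apply_basis_left_of_isOrthoᵢ hB, apply_basis_left_of_isOrthoᵢ hB', h]

lemma repr_apply_of_diagonal {φ : M →ₗ[R] M} {ξ : ι → R} (hφ : ∀ i, φ (b i) = ξ i • b i)
    (x : M) (j : ι) :
    b.repr (φ x) j = ξ j * b.repr x j := by
  suffices b.coord j ∘ₗ φ = ξ j • b.coord j from LinearMap.congr_fun this x
  refine b.ext fun i => ?_
  obtain rfl | hij := eq_or_ne i j
  · simp [hφ]
  · simp [hφ, hij]

end OrthogonalBasis

section Coboundary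

variable {R M : Type*} [CommRing R] [AddCommGroup M] [Module R M]

/-- The coboundary `δ_μ φ` of an endomorphism `φ` with respect to the product `μ`, as a bilinear
map. It measures the failure of `φ` to be a derivation of `μ`. -/
def coboundary (μ : M →ₗ[R] M →ₗ[R] M) (φ : M →ₗ[R] M) : M →ₗ[R] M →ₗ[R] M :=
  μ.compr₂ φ - μ.compl₂ φ - μ ∘ₗ φ

@[simp]
lemma coboundary_apply (μ : M →ₗ[R] M →ₗ[R] M) (φ : M →ₗ[R] M) (u v : M) :
    coboundary μ φ u v = φ (μ u v) - μ u (φ v) - μ (φ u) v :=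
  rfl

variable {ι : Type*} {b : Basis ι R M} {μ θ : M →ₗ[R] M →ₗ[R] M} {φ : M →ₗ[R] M} {ξ : ι → R}

lemma coboundary_basis_of_ne (hμ : μ.IsOrthoᵢ b) {i j : ι} (hij : i ≠ j) :
    coboundary μ φ (b i) (b j) =
      -(b.repr (φ (b j)) i • μ (b i) (b i) + b.repr (φ (b i)) j • μ (b j) (b j)) := by
  have hμij : μ (b i) (b j) = 0 := hμ hij
  rw [coboundary_apply, hμij, apply_basis_left_of_isOrthoᵢ hμ i (φ (b j)),
    apply_basis_right_of_isOrthoᵢ hμ (φ (b i)) j, map_zero]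
  abel

lemma isOrthoᵢ_coboundary_iff (hμ : μ.IsOrthoᵢ b)
    (hsq : LinearIndependent R fun i => μ (b i) (b i)) :
    (coboundary μ φ).IsOrthoᵢ b ↔ ∃ ξ : ι → R, ∀ i, φ (b i) = ξ i • b i := by
  constructor
  · intro hδ
    have off_diagonal {i j : ι} (hij : i ≠ j) : b.repr (φ (b i)) j = 0 := by
      have hcomb := neg_eq_zero.mp ((coboundary_basis_of_ne hμ hij).symm.trans (hδ hij))
      exact ((LinearIndepOn.pair_iff _ hij).mp (hsq.linearIndepOn _) _ _ hcomb).2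
    refine ⟨fun i => b.repr (φ (b i)) i, fun i => b.ext_elem fun j => ?_⟩
    obtain rfl | hij := eq_or_ne i j
    · simp
    · simp [off_diagonal hij, hij]
  · rintro ⟨ξ, hφ⟩ i j hij
    change coboundary μ φ (b i) (b j) = 0
    rw [coboundary_basis_of_ne hμ hij]
    simp [hφ, hij, hij.symm]

lemma repr_coboundary_basis_self_of_diagonal (hφ : ∀ i, φ (b i) = ξ i • b i) (i j : ι) :
    b.repr (coboundary μ φ (b i) (b i)) j = (ξ j - 2 * ξ i) * b.repr (μ (b i) (b i)) j := by
  simp only [coboundary_apply, hφ, map_sub, map_smul, LinearMap.smul_apply, Finsupp.sub_apply,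
    Finsupp.smul_apply, smul_eq_mul, repr_apply_of_diagonal hφ]
  ring

theorem exists_eq_coboundary_iff (hμ : μ.IsOrthoᵢ b)
    (hsq : LinearIndependent R fun i => μ (b i) (b i)) (hθ : θ.IsOrthoᵢ b) :
    (∃ φ, θ = coboundary μ φ) ↔
      ∃ ξ : ι → R, ∀ i j,
        b.repr (θ (b i) (b i)) j = (ξ j - 2 * ξ i) * b.repr (μ (b i) (b i)) j := by
  constructor
  · rintro ⟨φ, rfl⟩
    obtain ⟨ξ, hφ⟩ := (isOrthoᵢ_coboundary_iff hμ hsq).mp hθ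
    exact ⟨ξ, repr_coboundary_basis_self_of_diagonal hφ⟩
  · rintro ⟨ξ, hξ⟩
    let φ : M →ₗ[R] M := b.constr R fun i => ξ i • b i
    have hφ (i : ι) : φ (b i) = ξ i • b i := b.constr_basis R _ i
    have hδ : (coboundary μ φ).IsOrthoᵢ b := (isOrthoᵢ_coboundary_iff hμ hsq).mpr ⟨ξ, hφ⟩
    refine ⟨φ, ext_of_isOrthoᵢ hθ hδ fun i => b.ext_elem fun j => ?_⟩
    rw [hξ, repr_coboundary_basis_self_of_diagonal hφ]

lemma linearIndependent_pair_add_smul {x y : M} (hxy : LinearIndependent R ![x, y]) (a : R) :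
    LinearIndependent R ![y, x + a • y] := by
  refine LinearIndependent.pair_iff.mpr fun s t hst => ?_
  have hcomb : t • x + (s + t * a) • y = 0 := by
    rw [← hst]
    module
  obtain ⟨rfl, hs⟩ := LinearIndependent.pair_iff.mp hxy _ _ hcomb
  exact ⟨by simpa using hs, rfl⟩

theorem stmt11_general (a₄ : R) (b : Basis (Fin 2) R M) (μ θ : M →ₗ[R] M →ₗ[R] M)
    (hμ : μ.IsOrthoᵢ b) (hμ0 : μ (b 0) (b 0) = b 1) (hμ1 : μ (b 1) (b 1) = b 0 + a₄ • b 1)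
    (hθ : θ.IsOrthoᵢ b) :
    (∃ φ, θ = coboundary μ φ) ↔
      ∃ ξ₁ ξ₂ : R,
        θ (b 0) (b 0) = (ξ₂ - 2 * ξ₁) • b 1 ∧
        θ (b 1) (b 1) = (ξ₁ - 2 * ξ₂) • b 0 - (a₄ * ξ₂) • b 1 := by
  have hsq : LinearIndependent R fun i => μ (b i) (b i) := by
    have hb : LinearIndependent R ![b 0, b 1] := by
      rw [LinearIndependent.pair_iff, ← LinearIndepOn.pair_iff b zero_ne_one]
      exact b.linearIndependent.linearIndepOn _
    convert linearIndependent_pair_add_smul hb a₄ using 1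
    exact funext (Fin.forall_fin_two.mpr ⟨hμ0, hμ1⟩)
  rw [exists_eq_coboundary_iff hμ hsq hθ, (finTwoArrowEquiv R).exists_congr_left, Prod.exists]
  refine exists₂_congr fun ξ₁ ξ₂ => ?_
  have hcoeff : (ξ₂ - 2 * ξ₂) * a₄ = -(a₄ * ξ₂) := by ring
  simp [b.ext_elem_iff, Fin.forall_fin_two, hμ0, hμ1, hcoeff]

end Coboundary

/-- For the evolution algebra `𝓔₆(a₄)` on `ℂ²` with `e₁² = e₂`,
`e₂² = e₁ + a₄e₂`, a 2-cocycle `θ` is a 2-coboundary if and only if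
`θ(e₁,e₁) = (ξ₂ − 2ξ₁)e₂` and `θ(e₂,e₂) = (ξ₁ − 2ξ₂)e₁ − a₄ξ₂e₂` for some
`ξ₁, ξ₂ ∈ ℂ`. -/
theorem stmt11 (a₄ : ℂ)
    (e : Fin 2 → (Fin 2 → ℂ)) (he : ∀ i, e i = Pi.single i 1)
    (μ θ : (Fin 2 → ℂ) →ₗ[ℂ] (Fin 2 → ℂ) →ₗ[ℂ] (Fin 2 → ℂ))
    (hμz : ∀ i j : Fin 2, i ≠ j → μ (e i) (e j) = 0)
    (hμ0 : μ (e 0) (e 0) = e 1)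
    (hμ1 : μ (e 1) (e 1) = e 0 + a₄ • e 1)
    (hθz : ∀ i j : Fin 2, i ≠ j → θ (e i) (e j) = 0) :
    (∃ φ : (Fin 2 → ℂ) →ₗ[ℂ] (Fin 2 → ℂ),
        ∀ u v : Fin 2 → ℂ, θ u v = φ (μ u v) - μ u (φ v) - μ (φ u) v) ↔
    (∃ ξ₁ ξ₂ : ℂ,
        θ (e 0) (e 0) = (ξ₂ - 2 * ξ₁) • e 1 ∧
        θ (e 1) (e 1) = (ξ₁ - 2 * ξ₂) • e 0 - (a₄ * ξ₂) • e 1) := by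
  obtain rfl : e = Pi.basisFun ℂ (Fin 2) := funext fun i => by rw [he, Pi.basisFun_apply]
  simpa only [LinearMap.ext_iff₂, coboundary_apply] using
    stmt11_general a₄ (Pi.basisFun ℂ (Fin 2)) μ θ hμz hμ0 hμ1 hθz
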